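/- For every positive integer b, the symmetrical antitree AT(1,b,1) (which has diameter 2) is Bonnet-Myers sharp. -/

import Mathlib

open scoped Classical
open Finset

noncomputable section

/-- The degree of a vertex `x` in the graph `G`. -/
def deg {V : Type*} [Fintype V] (G : SimpleGraph V) (x : V) : ℕ :=
  (Finset.univ.filter (fun y => G.Adj x y)).card

/-- The diameter of `G`: the maximum of the combinatorial distance over all pairs of vertices. -/
def diam {V : Type*} [Fintype V] (G : SimpleGraph V) : ℕ :=
  Finset.univ.sup (fun xy : V × V => G.dist xy.1 xy.2)

/-- The probability measure `μ_x^p` of the lazy simple random walk at `x` with idleness `p`. -/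
def mu {V : Type*} [Fintype V] (G : SimpleGraph V) (p : ℝ) (x : V) : V → ℝ :=
  fun z => if z = x then p else if G.Adj x z then (1 - p) / (deg G x : ℝ) else 0

/-- The Wasserstein distance `W₁(μ₁, μ₂)` with respect to the combinatorial distance of `G`:
the infimum of the total transport cost over all transport plans from `μ₁` to `μ₂`. -/
def W1 {V : Type*} [Fintype V] (G : SimpleGraph V) (μ₁ μ₂ : V → ℝ) : ℝ :=
  sInf {c : ℝ | ∃ π : V → V → ℝ,
    (∀ x y, 0 ≤ π x y ∧ π x y ≤ 1) ∧
    (∀ x, ∑ y, π x y = μ₁ x) ∧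
    (∀ y, ∑ x, π x y = μ₂ y) ∧
    c = ∑ x, ∑ y, (G.dist x y : ℝ) * π x y}

/-- The `p`-Ollivier-Ricci curvature `κ_p(x,y) = 1 - W₁(μ_x^p, μ_y^p)`. -/
def kappa {V : Type*} [Fintype V] (G : SimpleGraph V) (p : ℝ) (x y : V) : ℝ :=
  1 - W1 G (mu G p x) (mu G p y)

/-- The Lin-Lu-Yau curvature `κ_LLY(x,y) = lim_{p→1} κ_p(x,y)/(1-p)`. -/
def kappaLLY {V : Type*} [Fintype V] (G : SimpleGraph V) (x y : V) : ℝ :=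
  Filter.limUnder (nhdsWithin 1 (Set.Iio 1)) (fun p => kappa G p x y / (1 - p))

/-- `G` is Bonnet-Myers sharp if the infimum of `κ_LLY` over the edges equals `2/diam(G)`. -/
def BMSharp {V : Type*} [Fintype V] (G : SimpleGraph V) : Prop :=
  sInf {r : ℝ | ∃ x y, G.Adj x y ∧ r = kappaLLY G x y} = 2 / (diam G : ℝ)

/-- `G` is obtained from the complete graph on its vertex set by deleting a matching
(a set of pairwise disjoint edges, encoded as a symmetric irreflexive relation in which
every vertex has at most one partner). -/
def IsMatchingDeletionOfComplete {V : Type*} (G : SimpleGraph V) : Prop :=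
  ∃ M : V → V → Prop, Symmetric M ∧ (∀ x, ¬ M x x) ∧
    (∀ x y z, M x y → M x z → y = z) ∧
    (∀ x y, G.Adj x y ↔ x ≠ y ∧ ¬ M x y)

/-- The graph `G(a,b)` on `2a+b` vertices `u_1, …, u_{2a}, v_1, …, v_b` (encoded as
`Fin (2a+b)`, with `u_i` the index `i-1` and `v_j` the index `2a+j-1`), in which two distinct
vertices are adjacent unless they form a pair `{u_{2i-1}, u_{2i}}`, i.e. `G(a,b)` is the
complete graph `K_{2a+b}` with a matching of size `a` deleted. -/
def Gab (a b : ℕ) : SimpleGraph (Fin (2*a+b)) where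
  Adj x y := x ≠ y ∧ ¬((x : ℕ) < 2*a ∧ (y : ℕ) < 2*a ∧ (x : ℕ)/2 = (y : ℕ)/2)
  symm := by
    refine ⟨fun x y h => ?_⟩
    exact ⟨h.1.symm, fun hc => h.2 ⟨hc.2.1, hc.1, hc.2.2.symm⟩⟩
  loopless := by refine ⟨fun x h => ?_⟩; exact h.1 rfl

/-- The antitree `AT(a_1, …, a_N)` on the disjoint union of sets `V_1, …, V_N` with
`|V_k| = a_k` (0-indexed here: `V_k` is `Fin (a k)` for `k : Fin N`): two distinct vertices
are adjacent iff they lie in the same set or in consecutive sets. -/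
def antitree (N : ℕ) (a : Fin N → ℕ) : SimpleGraph (Σ k : Fin N, Fin (a k)) where
  Adj x y := x ≠ y ∧
    ((x.1 : ℕ) = (y.1 : ℕ) ∨ (x.1 : ℕ) + 1 = (y.1 : ℕ) ∨ (y.1 : ℕ) + 1 = (x.1 : ℕ))
  symm := by
    refine ⟨fun x y h => ?_⟩
    refine ⟨h.1.symm, ?_⟩
    rcases h.2 with h2 | h2 | h2
    · exact Or.inl h2.symm
    · exact Or.inr (Or.inr h2)
    · exact Or.inr (Or.inl h2)
  loopless := by refine ⟨fun x h => ?_⟩; exact h.1 rfl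

/-!
A plan that reaches the lower bound of weak Kantorovich duality determines `W₁`, so each curvature
is found by exhibiting a transport plan and a `1`-Lipschitz function of equal value. Let `G` be a
complete graph minus a nonempty matching, with at least three vertices.

* If `x ∼ y` are both universal, then `μ_x` and `μ_y` differ only in the mass at `x` and `y`; moving
  the surplus along the edge gives `κ(x, y) = 1 + 1 / d`.
* Otherwise we may assume `d_x ≤ d_y`; then `x` is matched to some `w`. Moving
  `p - (1 - p) / d_y` from `x` to `y` and bringing the missing mass `(1 - p) / d_y` to `w` from its
  neighbours costs `p`, the value of the function `δ_x - δ_w`, so `κ(x, y) = 1`.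

As `diam G = 2`, sharpness says that the least curvature is `1`.
-/

section TransportPlan

variable {V : Type*} [Fintype V]

/-- A transport plan from `μ₁` to `μ₂`. The constraint `π x y ≤ 1` in `W1` is left out: it follows
from `μ₁ ≤ 1`. -/
structure IsTransportPlan (μ₁ μ₂ : V → ℝ) (π : V → V → ℝ) : Prop where
  nonneg : ∀ x y, 0 ≤ π x y
  sum_left : ∀ x, ∑ y, π x y = μ₁ x
  sum_right : ∀ y, ∑ x, π x y = μ₂ y

/-- The total cost of the plan `π` when transport is charged by the distance of `G`. -/
def transportCost (G : SimpleGraph V) (π : V → V → ℝ) : ℝ :=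
  ∑ x, ∑ y, (G.dist x y : ℝ) * π x y

/-- The potentials of Kantorovich duality: `1`-Lipschitz functions for the distance of `G`. -/
def IsOneLipschitz (G : SimpleGraph V) (f : V → ℝ) : Prop :=
  ∀ x y, f x - f y ≤ G.dist x y

/-- The Monge plan that moves all the mass of `μ` at `x` to `φ x`. -/
def mongePlan (φ : V → V) (μ : V → ℝ) : V → V → ℝ :=
  fun x => Pi.single (φ x) (μ x)

variable {G : SimpleGraph V} {μ₁ μ₂ ν₁ ν₂ μ ν f : V → ℝ} {π ρ : V → V → ℝ}

theorem IsTransportPlan.le_one (hπ : IsTransportPlan μ₁ μ₂ π) (hμ₁ : ∀ x, μ₁ x ≤ 1) (x y : V) :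
    π x y ≤ 1 :=
  calc π x y ≤ ∑ z, π x z := single_le_sum (fun z _ => hπ.nonneg x z) (mem_univ y)
    _ = μ₁ x := hπ.sum_left x
    _ ≤ 1 := hμ₁ x

theorem IsTransportPlan.add (hπ : IsTransportPlan μ₁ μ₂ π) (hρ : IsTransportPlan ν₁ ν₂ ρ) :
    IsTransportPlan (μ₁ + ν₁) (μ₂ + ν₂) (π + ρ) where
  nonneg x y := add_nonneg (hπ.nonneg x y) (hρ.nonneg x y)
  sum_left x := by simp [sum_add_distrib, hπ.sum_left, hρ.sum_left]
  sum_right y := by simp [sum_add_distrib, hπ.sum_right, hρ.sum_right]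

theorem isTransportPlan_mongePlan (φ : V → V) (hμ : ∀ x, 0 ≤ μ x) :
    IsTransportPlan μ (∑ x, Pi.single (φ x) (μ x)) (mongePlan φ μ) where
  nonneg x y := by
    rw [mongePlan, Pi.single_apply]
    split_ifs
    exacts [hμ x, le_rfl]
  sum_left x := by simp [mongePlan]
  sum_right y := by simp [mongePlan]

theorem isTransportPlan_mongePlan_id (hμ : ∀ x, 0 ≤ μ x) :
    IsTransportPlan μ μ (mongePlan id μ) := by
  simpa [univ_sum_single] using isTransportPlan_mongePlan id hμ

theorem isTransportPlan_mongePlan_const (w : V) (hμ : ∀ x, 0 ≤ μ x) :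
    IsTransportPlan μ (Pi.single w (∑ x, μ x)) (mongePlan (fun _ => w) μ) := by
  have hsum : ∑ x, Pi.single w (μ x) = (Pi.single w (∑ x, μ x) : V → ℝ) :=
    (map_sum (AddMonoidHom.single (fun _ : V => ℝ) w) μ univ).symm
  simpa only [hsum] using isTransportPlan_mongePlan (fun _ => w) hμ

theorem isTransportPlan_mongePlan_single (x y : V) {a : ℝ} (ha : 0 ≤ a) :
    IsTransportPlan (Pi.single x a) (Pi.single y a) (mongePlan (fun _ => y) (Pi.single x a)) := by
  simpa using isTransportPlan_mongePlan_const y (μ := Pi.single x a)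
    (Pi.single_nonneg (α := fun _ => ℝ).mpr ha)

theorem transportCost_add : transportCost G (π + ρ) = transportCost G π + transportCost G ρ := by
  simp [transportCost, mul_add, sum_add_distrib]

theorem transportCost_swap : transportCost G (fun x y => π y x) = transportCost G π := by
  rw [transportCost, sum_comm]
  simp only [transportCost, G.dist_comm]

theorem transportCost_mongePlan (φ : V → V) :
    transportCost G (mongePlan φ μ) = ∑ x, (G.dist x (φ x) : ℝ) * μ x := by
  simp [transportCost, mongePlan, Pi.single_apply]

theorem transportCost_mongePlan_id : transportCost G (mongePlan id μ) = 0 := by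
  simp [transportCost_mongePlan]

theorem transportCost_mongePlan_single (x y : V) (a : ℝ) :
    transportCost G (mongePlan (fun _ => y) (Pi.single x a)) = G.dist x y * a := by
  simp [transportCost_mongePlan, Pi.single_apply]

theorem exists_isTransportPlan_add_single (hμ : ∀ z, 0 ≤ μ z) (x y : V) {a : ℝ} (ha : 0 ≤ a) :
    ∃ π, IsTransportPlan (μ + Pi.single x a) (μ + Pi.single y a) π ∧
      transportCost G π = G.dist x y * a := by
  refine ⟨_, (isTransportPlan_mongePlan_id hμ).add (isTransportPlan_mongePlan_single x y ha), ?_⟩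
  rw [transportCost_add, transportCost_mongePlan_id, transportCost_mongePlan_single, zero_add]

theorem exists_isTransportPlan_add_single_add (hμ : ∀ z, 0 ≤ μ z) (hν : ∀ z, 0 ≤ ν z) (x y w : V)
    {a : ℝ} (ha : 0 ≤ a) :
    ∃ π, IsTransportPlan (μ + Pi.single x a + ν) (μ + Pi.single y a + Pi.single w (∑ z, ν z)) π ∧
      transportCost G π = G.dist x y * a + ∑ z, G.dist z w * ν z := by
  obtain ⟨π, hπ, hcost⟩ := exists_isTransportPlan_add_single (G := G) hμ x y ha
  refine ⟨_, hπ.add (isTransportPlan_mongePlan_const w hν), ?_⟩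
  rw [transportCost_add, hcost, transportCost_mongePlan]

theorem sum_mul_sub_sum_mul_le_transportCost (hπ : IsTransportPlan μ₁ μ₂ π)
    (hf : IsOneLipschitz G f) :
    ∑ x, f x * μ₁ x - ∑ y, f y * μ₂ y ≤ transportCost G π :=
  calc ∑ x, f x * μ₁ x - ∑ y, f y * μ₂ y
      = ∑ x, ∑ y, f x * π x y - ∑ x, ∑ y, f y * π x y := by
        rw [sum_comm (f := fun x y => f y * π x y)]
        simp only [← mul_sum, hπ.sum_left, hπ.sum_right]
    _ = ∑ x, ∑ y, (f x - f y) * π x y := by simp only [sub_mul, sum_sub_distrib]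
    _ ≤ transportCost G π :=
        sum_le_sum fun x _ => sum_le_sum fun y _ =>
          mul_le_mul_of_nonneg_right (hf x y) (hπ.nonneg x y)

theorem W1_eq_of_isTransportPlan (hπ : IsTransportPlan μ₁ μ₂ π) (hμ₁ : ∀ x, μ₁ x ≤ 1)
    (hf : IsOneLipschitz G f)
    (hcost : transportCost G π = ∑ x, f x * μ₁ x - ∑ y, f y * μ₂ y) :
    W1 G μ₁ μ₂ = transportCost G π := by
  refine IsLeast.csInf_eq ⟨?_, ?_⟩
  · exact ⟨π, fun x y => ⟨hπ.nonneg x y, hπ.le_one hμ₁ x y⟩, hπ.sum_left, hπ.sum_right, rfl⟩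
  · rintro _ ⟨ρ, hρ, hleft, hright, rfl⟩
    rw [hcost]
    exact sum_mul_sub_sum_mul_le_transportCost ⟨fun x y => (hρ x y).1, hleft, hright⟩ hf

theorem W1_comm (G : SimpleGraph V) (μ₁ μ₂ : V → ℝ) : W1 G μ₁ μ₂ = W1 G μ₂ μ₁ := by
  refine congrArg sInf (Set.ext fun c => ⟨?_, ?_⟩) <;>
  · rintro ⟨π, hπ, hleft, hright, rfl⟩
    exact ⟨fun x y => π y x, fun x y => hπ y x, hright, hleft, transportCost_swap.symm⟩

end TransportPlan

section Lipschitz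

variable {V : Type*} {G : SimpleGraph V} {x w : V}

theorem isOneLipschitz_single (hconn : G.Connected) (x : V) :
    IsOneLipschitz G (Pi.single x 1) := by
  intro u v
  rcases eq_or_ne u v with rfl | huv
  · simp
  have hdist : (1 : ℝ) ≤ G.dist u v := by exact_mod_cast hconn.pos_dist_of_ne huv
  simp only [Pi.single_apply]
  split_ifs <;> linarith

theorem isOneLipschitz_single_sub_single (hconn : G.Connected) (hxw : x ≠ w)
    (hadj : ¬ G.Adj x w) : IsOneLipschitz G (Pi.single x 1 - Pi.single w 1) := by
  intro u v
  by_cases huv : u = x ∧ v = w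
  · obtain ⟨rfl, rfl⟩ := huv
    have hdist : (2 : ℝ) ≤ G.dist u v := by
      exact_mod_cast hconn.one_lt_dist_of_ne_of_not_adj hxw hadj
    simpa [hxw, hxw.symm, one_add_one_eq_two] using hdist
  rcases eq_or_ne u v with rfl | hne
  · simp
  have hdist : (1 : ℝ) ≤ G.dist u v := by exact_mod_cast hconn.pos_dist_of_ne hne
  simp only [Pi.sub_apply, Pi.single_apply]
  split_ifs <;> grind

end Lipschitz

section RandomWalk

variable {V : Type*} {G : SimpleGraph V} {p : ℝ} {x y z w : V}

theorem not_adj_of_neighborSet_subset (hx : G.neighborSet x ⊆ G.neighborSet w) :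
    ¬ G.Adj x w :=
  fun hxw => G.irrefl (hx hxw)

variable [Fintype V]

theorem deg_pos (hxy : G.Adj x y) : 0 < deg G x :=
  card_pos.mpr ⟨y, by simpa using hxy⟩

theorem deg_add_one (G : SimpleGraph V) (x : V) :
    deg G x + 1 = (insert x (G.neighborSet x)).ncard := by
  rw [Set.ncard_insert_of_notMem (by simp), deg, ← Set.ncard_coe_finset]
  congr 2
  ext
  simp

theorem deg_eq_of_insert_neighborSet_eq
    (hN : insert x (G.neighborSet x) = insert y (G.neighborSet y)) : deg G x = deg G y := by
  rw [← Nat.add_right_cancel_iff (n := 1), deg_add_one, deg_add_one, hN]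

theorem deg_add_one_eq_card_iff : deg G x + 1 = Fintype.card V ↔ G.IsUniversal x := by
  rw [deg_add_one, ← Nat.card_eq_fintype_card, ← SimpleGraph.insert_neighborSet_eq_univ,
    Set.eq_univ_iff_ncard]

theorem isUniversal_of_deg_le (hx : G.IsUniversal x) (hdeg : deg G x ≤ deg G y) :
    G.IsUniversal y := by
  rw [← deg_add_one_eq_card_iff] at hx ⊢
  refine le_antisymm ?_ (hx ▸ Nat.add_le_add_right hdeg 1)
  rw [deg_add_one, ← Nat.card_eq_fintype_card]
  exact Set.ncard_le_card _

theorem mu_self : mu G p x x = p := if_pos rfl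

theorem mu_of_adj (hxz : G.Adj x z) : mu G p x z = (1 - p) / deg G x := by
  rw [mu, if_neg hxz.ne', if_pos hxz]

theorem mu_of_not_adj (hxz : x ≠ z) (hadj : ¬ G.Adj x z) : mu G p x z = 0 := by
  rw [mu, if_neg hxz.symm, if_neg hadj]

theorem one_sub_div_deg_nonneg (G : SimpleGraph V) (hp₁ : p ≤ 1) (x : V) :
    0 ≤ (1 - p) / (deg G x : ℝ) :=
  div_nonneg (sub_nonneg.mpr hp₁) (Nat.cast_nonneg _)

theorem one_sub_div_deg_le (hx : 0 < deg G x) (hdeg : deg G x ≤ deg G y) (hp₁ : p ≤ 1) :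
    (1 - p) / (deg G y : ℝ) ≤ (1 - p) / deg G x :=
  div_le_div_of_nonneg_left (sub_nonneg.mpr hp₁) (by exact_mod_cast hx) (by exact_mod_cast hdeg)

theorem mu_nonneg (hp₀ : 0 ≤ p) (hp₁ : p ≤ 1) (x z : V) : 0 ≤ mu G p x z := by
  rw [mu]
  split_ifs
  exacts [hp₀, one_sub_div_deg_nonneg G hp₁ x, le_rfl]

theorem sum_mu (hx : 0 < deg G x) : ∑ z, mu G p x z = 1 := by
  have hdeg : (deg G x : ℝ) ≠ 0 := by exact_mod_cast hx.ne'
  have hsplit (z : V) :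
      mu G p x z = (if z = x then p else 0) + if G.Adj x z then (1 - p) / deg G x else 0 := by
    rw [mu]
    split_ifs <;> simp_all
  have hcard : #{z | G.Adj x z} = deg G x := rfl
  simp only [hsplit, sum_add_distrib, sum_ite_eq', mem_univ, if_true, ← sum_filter, sum_const,
    hcard, nsmul_eq_mul]
  field_simp
  ring

theorem mu_le_one (hp₀ : 0 ≤ p) (hp₁ : p ≤ 1) (hx : 0 < deg G x) (z : V) : mu G p x z ≤ 1 :=
  sum_mu (p := p) hx ▸ single_le_sum (fun z _ => mu_nonneg hp₀ hp₁ x z) (mem_univ z)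

theorem exists_isTransportPlan_mu_of_insert_neighborSet_eq (hxy : G.Adj x y)
    (hN : insert x (G.neighborSet x) = insert y (G.neighborSet y)) (hp₁ : p ≤ 1)
    (hp : (1 - p) / deg G x ≤ p) :
    ∃ π, IsTransportPlan (mu G p x) (mu G p y) π ∧
      transportCost G π = p - (1 - p) / deg G x := by
  have hdeg : deg G x = deg G y := deg_eq_of_insert_neighborSet_eq hN
  have hq₀ := one_sub_div_deg_nonneg G hp₁ x
  set q := (1 - p) / (deg G x : ℝ)
  set common : V → ℝ := fun z => if G.Adj x z ∨ x = z then q else 0 with hcommon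
  have hμx : mu G p x = common + Pi.single x (p - q) := by
    ext z
    simp only [mu, hcommon, Pi.add_apply, Pi.single_apply]
    split_ifs <;> grind
  have hμy : mu G p y = common + Pi.single y (p - q) := by
    ext z
    have hz := Set.ext_iff.mp hN z
    simp only [Set.mem_insert_iff, SimpleGraph.mem_neighborSet] at hz
    simp only [mu, hcommon, Pi.add_apply, Pi.single_apply, ← hdeg]
    split_ifs <;> grind
  have hcommon_nonneg (z : V) : 0 ≤ common z := by
    simp only [hcommon]
    split_ifs
    exacts [hq₀, le_rfl]
  rw [hμx, hμy]
  simpa [SimpleGraph.dist_eq_one_iff_adj.mpr hxy] using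
    exists_isTransportPlan_add_single (G := G) hcommon_nonneg x y (sub_nonneg.mpr hp)

theorem W1_mu_of_insert_neighborSet_eq (hconn : G.Connected) (hxy : G.Adj x y)
    (hN : insert x (G.neighborSet x) = insert y (G.neighborSet y)) (hp₁ : p ≤ 1)
    (hp : (1 - p) / deg G x ≤ p) :
    W1 G (mu G p x) (mu G p y) = p - (1 - p) / deg G x := by
  obtain ⟨π, hπ, hcost⟩ := exists_isTransportPlan_mu_of_insert_neighborSet_eq hxy hN hp₁ hp
  have hp₀ : 0 ≤ p := (one_sub_div_deg_nonneg G hp₁ x).trans hp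
  have hdual : ∑ z, (Pi.single x 1 : V → ℝ) z * mu G p x z
      - ∑ z, (Pi.single x 1 : V → ℝ) z * mu G p y z = p - (1 - p) / deg G x := by
    simp [Pi.single_apply, mu_self, mu_of_adj hxy.symm, deg_eq_of_insert_neighborSet_eq hN]
  rw [W1_eq_of_isTransportPlan hπ (mu_le_one hp₀ hp₁ (deg_pos hxy))
    (isOneLipschitz_single hconn x) (hcost.trans hdual.symm), hcost]

theorem exists_isTransportPlan_mu_of_neighborSet_subset (hxy : G.Adj x y) (hxw : x ≠ w)
    (hx : G.neighborSet x ⊆ G.neighborSet w)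
    (hy : G.neighborSet y ⊆ insert x (insert w (G.neighborSet x)))
    (hdeg : deg G x ≤ deg G y) (hp₁ : p ≤ 1) (hp : (1 - p) / deg G y ≤ p) :
    ∃ π, IsTransportPlan (mu G p x) (mu G p y) π ∧ transportCost G π = p := by
  have hadj := not_adj_of_neighborSet_subset hx
  have hyw := (hx hxy).symm
  have hq₀ := one_sub_div_deg_nonneg G hp₁ y
  have hqx := one_sub_div_deg_le (deg_pos hxy) hdeg hp₁
  set q := (1 - p) / (deg G y : ℝ)
  set common : V → ℝ := mu G p y - Pi.single y (p - q) - Pi.single w q with hcommon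
  set surplus : V → ℝ := mu G p x - Pi.single x (p - q) - common with hsurplus
  have hcommon_nonneg (z : V) : 0 ≤ common z := by
    simp only [hcommon, mu, Pi.sub_apply, Pi.single_apply]
    split_ifs <;> grind
  have hsurplus_of_adj (z : V) (hz : G.Adj x z) : 0 ≤ surplus z := by
    simp only [hsurplus, hcommon, mu, Pi.sub_apply, Pi.single_apply]
    split_ifs <;> grind [G.ne_of_adj hz]
  have hsurplus_of_not_adj (z : V) (hz : ¬ G.Adj x z) : surplus z = 0 := by
    have hyz := @hy z
    simp only [Set.mem_insert_iff, SimpleGraph.mem_neighborSet] at hyz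
    simp only [hsurplus, hcommon, mu, Pi.sub_apply, Pi.single_apply]
    split_ifs <;> grind [hxy.symm]
  have hsurplus_nonneg (z : V) : 0 ≤ surplus z :=
    (em (G.Adj x z)).elim (hsurplus_of_adj z) fun hz => (hsurplus_of_not_adj z hz).ge
  have hsurplus_sum : ∑ z, surplus z = q := by
    simp only [hsurplus, hcommon, Pi.sub_apply, sum_sub_distrib, sum_mu (deg_pos hxy),
      sum_mu (deg_pos hyw), sum_pi_single', mem_univ, if_true]
    ring
  have hsurplus_dist (z : V) : (G.dist z w : ℝ) * surplus z = surplus z := by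
    by_cases hz : G.Adj x z
    · rw [SimpleGraph.dist_eq_one_iff_adj.mpr (hx hz).symm, Nat.cast_one, one_mul]
    · rw [hsurplus_of_not_adj z hz, mul_zero]
  have hμx : mu G p x = common + Pi.single x (p - q) + surplus := by rw [hsurplus]; abel
  have hμy : mu G p y = common + Pi.single y (p - q) + Pi.single w q := by rw [hcommon]; abel
  rw [hμx, hμy]
  simpa [SimpleGraph.dist_eq_one_iff_adj.mpr hxy, hsurplus_dist, hsurplus_sum] using
    exists_isTransportPlan_add_single_add (G := G) hcommon_nonneg hsurplus_nonneg x y w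
      (sub_nonneg.mpr hp)

theorem W1_mu_of_neighborSet_subset (hconn : G.Connected) (hxy : G.Adj x y) (hxw : x ≠ w)
    (hx : G.neighborSet x ⊆ G.neighborSet w)
    (hy : G.neighborSet y ⊆ insert x (insert w (G.neighborSet x)))
    (hdeg : deg G x ≤ deg G y) (hp₁ : p ≤ 1) (hp : (1 - p) / deg G y ≤ p) :
    W1 G (mu G p x) (mu G p y) = p := by
  obtain ⟨π, hπ, hcost⟩ :=
    exists_isTransportPlan_mu_of_neighborSet_subset hxy hxw hx hy hdeg hp₁ hp
  have hp₀ : 0 ≤ p := (one_sub_div_deg_nonneg G hp₁ y).trans hp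
  have hadj : ¬ G.Adj x w := not_adj_of_neighborSet_subset hx
  have hyw : G.Adj y w := (hx hxy).symm
  have hdual : ∑ z, (Pi.single x 1 - Pi.single w 1 : V → ℝ) z * mu G p x z
      - ∑ z, (Pi.single x 1 - Pi.single w 1 : V → ℝ) z * mu G p y z = p := by
    simp [sub_mul, Pi.single_apply, mu_self, mu_of_not_adj hxw hadj, mu_of_adj hxy.symm,
      mu_of_adj hyw]
  rw [W1_eq_of_isTransportPlan hπ (mu_le_one hp₀ hp₁ (deg_pos hxy))
    (isOneLipschitz_single_sub_single hconn hxw hadj) (hcost.trans hdual.symm), hcost]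

end RandomWalk

section Curvature

variable {V : Type*} [Fintype V] {G : SimpleGraph V} {x y w : V}

theorem kappaLLY_comm (G : SimpleGraph V) (x y : V) : kappaLLY G x y = kappaLLY G y x := by
  simp only [kappaLLY, kappa, W1_comm G (mu G _ x)]

theorem kappaLLY_eq_of_eventually_W1_eq {k : ℝ}
    (hW : ∀ᶠ p in nhdsWithin 1 (Set.Iio 1), W1 G (mu G p x) (mu G p y) = 1 - k * (1 - p)) :
    kappaLLY G x y = k := by
  refine (tendsto_const_nhds.congr' ?_).limUnder_eq
  filter_upwards [hW, self_mem_nhdsWithin] with p hWp hp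
  rw [kappa, hWp, sub_sub_cancel, mul_div_cancel_right₀ _ (sub_pos.mpr hp).ne']

theorem eventually_one_sub_div_deg_le (hxy : G.Adj x y) :
    ∀ᶠ p : ℝ in nhdsWithin 1 (Set.Iio 1), p ≤ 1 ∧ (1 - p) / deg G x ≤ p := by
  filter_upwards [Ioo_mem_nhdsLT (show (1 / 2 : ℝ) < 1 by norm_num)] with p ⟨hp, hp₁⟩
  have hdeg : (1 : ℝ) ≤ deg G x := by exact_mod_cast deg_pos hxy
  exact ⟨hp₁.le, (div_le_self (sub_nonneg.mpr hp₁.le) hdeg).trans (by linarith)⟩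

theorem kappaLLY_of_insert_neighborSet_eq (hconn : G.Connected) (hxy : G.Adj x y)
    (hN : insert x (G.neighborSet x) = insert y (G.neighborSet y)) :
    kappaLLY G x y = 1 + 1 / deg G x := by
  refine kappaLLY_eq_of_eventually_W1_eq ?_
  filter_upwards [eventually_one_sub_div_deg_le hxy] with p ⟨hp₁, hp⟩
  rw [W1_mu_of_insert_neighborSet_eq hconn hxy hN hp₁ hp]
  ring

theorem kappaLLY_of_neighborSet_subset (hconn : G.Connected) (hxy : G.Adj x y) (hxw : x ≠ w)
    (hx : G.neighborSet x ⊆ G.neighborSet w)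
    (hy : G.neighborSet y ⊆ insert x (insert w (G.neighborSet x)))
    (hdeg : deg G x ≤ deg G y) : kappaLLY G x y = 1 := by
  refine kappaLLY_eq_of_eventually_W1_eq ?_
  filter_upwards [eventually_one_sub_div_deg_le hxy.symm] with p ⟨hp₁, hp⟩
  rw [W1_mu_of_neighborSet_subset hconn hxy hxw hx hy hdeg hp₁ hp]
  ring

end Curvature

namespace IsMatchingDeletionOfComplete

variable {V : Type*} {G : SimpleGraph V} {x y w : V}

theorem eq_of_not_adj (hG : IsMatchingDeletionOfComplete G) (hxy : x ≠ y) (hxy' : ¬ G.Adj x y)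
    (hxw : x ≠ w) (hxw' : ¬ G.Adj x w) : y = w := by
  obtain ⟨M, -, -, hM, hadj⟩ := hG
  rw [hadj] at hxy' hxw'
  exact hM x y w (by tauto) (by tauto)

variable [Fintype V]

theorem exists_adj_adj (hG : IsMatchingDeletionOfComplete G) (hcard : 2 < Fintype.card V)
    (hxy : x ≠ y) (hadj : ¬ G.Adj x y) : ∃ z, G.Adj x z ∧ G.Adj z y := by
  obtain ⟨z, hz⟩ : ∃ z, z ∉ ({x, y} : Finset V) := by
    by_contra! hall
    have := card_le_card fun z (_ : z ∈ univ) => hall z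
    grind [card_univ, card_le_two (a := x) (b := y)]
  simp only [mem_insert, mem_singleton, not_or] at hz
  refine ⟨z, ?_, ?_⟩
  · by_contra h
    exact hz.2 (hG.eq_of_not_adj (Ne.symm hz.1) h hxy hadj)
  · by_contra h
    exact hz.1 (hG.eq_of_not_adj (Ne.symm hz.2) (mt SimpleGraph.Adj.symm h) hxy.symm
      (mt SimpleGraph.Adj.symm hadj))

theorem connected (hG : IsMatchingDeletionOfComplete G) (hcard : 2 < Fintype.card V) :
    G.Connected := by
  have : Nonempty V := Fintype.card_pos_iff.mp (by lia)
  refine ⟨fun x y => ?_⟩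
  rcases eq_or_ne x y with rfl | hxy
  · rfl
  by_cases hadj : G.Adj x y
  · exact hadj.reachable
  obtain ⟨z, hxz, hzy⟩ := hG.exists_adj_adj hcard hxy hadj
  exact hxz.reachable.trans hzy.reachable

theorem dist_le_two (hG : IsMatchingDeletionOfComplete G) (hcard : 2 < Fintype.card V) (x y : V) :
    G.dist x y ≤ 2 := by
  rcases eq_or_ne x y with rfl | hxy
  · simp
  by_cases hadj : G.Adj x y
  · simp [SimpleGraph.dist_eq_one_iff_adj.mpr hadj]
  obtain ⟨z, hxz, hzy⟩ := hG.exists_adj_adj hcard hxy hadj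
  exact SimpleGraph.dist_le (.cons hxz (.cons hzy .nil))

theorem diam_eq_two (hG : IsMatchingDeletionOfComplete G) (hcard : 2 < Fintype.card V)
    (hxy : x ≠ y) (hadj : ¬ G.Adj x y) : diam G = 2 := by
  refine le_antisymm (Finset.sup_le fun xy _ => hG.dist_le_two hcard xy.1 xy.2) ?_
  exact ((hG.connected hcard).one_lt_dist_of_ne_of_not_adj hxy hadj).trans_le
    (le_sup (f := fun xy : V × V => G.dist xy.1 xy.2) (mem_univ (x, y)))

theorem kappaLLY_eq_one (hG : IsMatchingDeletionOfComplete G) (hcard : 2 < Fintype.card V)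
    (hxy : G.Adj x y) (hxw : x ≠ w) (hadj : ¬ G.Adj x w) (hdeg : deg G x ≤ deg G y) :
    kappaLLY G x y = 1 := by
  refine kappaLLY_of_neighborSet_subset (hG.connected hcard) hxy hxw ?_ ?_ hdeg
  · intro z hxz
    by_contra hwz
    have hwz' : w ≠ z := by rintro rfl; exact hadj hxz
    exact hxz.ne (hG.eq_of_not_adj hxw.symm (mt SimpleGraph.Adj.symm hadj) hwz' hwz)
  · intro z _
    by_contra hz
    simp only [Set.mem_insert_iff, SimpleGraph.mem_neighborSet, not_or] at hz
    exact hz.2.1 (hG.eq_of_not_adj (Ne.symm hz.1) hz.2.2 hxw hadj)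

theorem one_le_kappaLLY (hG : IsMatchingDeletionOfComplete G) (hcard : 2 < Fintype.card V)
    (hxy : G.Adj x y) : 1 ≤ kappaLLY G x y := by
  wlog hdeg : deg G x ≤ deg G y generalizing x y
  · rw [kappaLLY_comm]
    exact this hxy.symm (le_of_not_ge hdeg)
  by_cases hx : G.IsUniversal x
  · have hy : G.IsUniversal y := isUniversal_of_deg_le hx hdeg
    rw [kappaLLY_of_insert_neighborSet_eq (hG.connected hcard) hxy (by
      rw [SimpleGraph.insert_neighborSet_eq_univ.mpr hx,
        SimpleGraph.insert_neighborSet_eq_univ.mpr hy])]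
    exact le_add_of_nonneg_right (by positivity)
  · simp only [SimpleGraph.IsUniversal, not_forall] at hx
    obtain ⟨w, hxw, hadj⟩ := hx
    exact (hG.kappaLLY_eq_one hcard hxy hxw hadj hdeg).ge

end IsMatchingDeletionOfComplete

theorem stmt17_general {V : Type*} [Fintype V] {G : SimpleGraph V}
    (hG : IsMatchingDeletionOfComplete G) (hcard : 2 < Fintype.card V) (hne : G ≠ ⊤) :
    BMSharp G := by
  have : Nonempty V := (hG.connected hcard).nonempty
  obtain ⟨x, hmin⟩ := Finite.exists_min (deg G)
  have hx : ¬ G.IsUniversal x := fun hx =>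
    hne (eq_top_iff.mpr fun u v huv => isUniversal_of_deg_le hx (hmin u) huv.ne)
  simp only [SimpleGraph.IsUniversal, not_forall] at hx
  obtain ⟨w, hxw, hadj⟩ := hx
  obtain ⟨y, hxy, -⟩ := hG.exists_adj_adj hcard hxw hadj
  rw [BMSharp, hG.diam_eq_two hcard hxw hadj, Nat.cast_ofNat, div_self two_ne_zero]
  refine IsLeast.csInf_eq ⟨?_, ?_⟩
  · exact ⟨x, y, hxy, (hG.kappaLLY_eq_one hcard hxy hxw hadj (hmin y)).symm⟩
  · rintro _ ⟨u, v, huv, rfl⟩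
    exact hG.one_le_kappaLLY hcard huv

section Antitree

variable {b : ℕ}

theorem isMatchingDeletionOfComplete_antitree :
    IsMatchingDeletionOfComplete (antitree 3 ![1, b, 1]) := by
  refine ⟨fun x y => x.1 = 0 ∧ y.1 = 2 ∨ x.1 = 2 ∧ y.1 = 0, fun x y => by tauto, ?_, ?_, ?_⟩
  · intro x hx
    grind
  · have heq (y z : Σ k : Fin 3, Fin (![1, b, 1] k)) (hy : y.1 = 0 ∨ y.1 = 2)
        (hyz : y.1 = z.1) : y = z := by
      obtain ⟨k, i⟩ := y
      obtain ⟨l, j⟩ := z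
      obtain rfl : k = l := hyz
      have : Subsingleton (Fin (![1, b, 1] k)) := by
        rcases hy with rfl | rfl <;> exact inferInstanceAs (Subsingleton (Fin 1))
      rw [Subsingleton.elim i j]
    grind
  · intro x y
    refine and_congr_right fun _ => ?_
    beta_reduce
    generalize x.1 = i, y.1 = j
    revert i j
    decide

theorem two_lt_card_antitree (hb : 0 < b) :
    2 < Fintype.card (Σ k : Fin 3, Fin (![1, b, 1] k)) := by
  simp only [Fintype.card_sigma, Fintype.card_fin, Fin.sum_univ_three, Matrix.cons_val]
  lia

theorem antitree_ne_top : antitree 3 ![1, b, 1] ≠ ⊤ := by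
  intro h
  have hadj : (antitree 3 ![1, b, 1]).Adj ⟨0, (0 : Fin 1)⟩ ⟨2, (0 : Fin 1)⟩ := by
    rw [h]
    exact ne_of_apply_ne Sigma.fst (show (0 : Fin 3) ≠ 2 by decide)
  simp [antitree] at hadj

end Antitree

/-- Every symmetrical antitree `AT(1,b,1)` of diameter 2 is Bonnet-Myers
sharp. -/
theorem stmt17 (b : ℕ) (hb : 0 < b) :
    BMSharp (antitree 3 ![1, b, 1]) :=
  stmt17_general isMatchingDeletionOfComplete_antitree (two_lt_card_antitree hb) antitree_ne_top
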